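/- (Deficiency theorem, extension criterion.) Let H be a complex Hilbert space and let T be a densely defined, closed, symmetric linear operator on H, with deficiency subspaces N₊ = ker(T† − i·I) and N₋ = ker(T† + i·I). Then T admits a self-adjoint extension (a self-adjoint operator S with D(T) ⊆ D(S) and S agreeing with T on D(T)) if and only if there exists an isometric linear isomorphism from N₊ onto N₋ (equivalently, N₊ and N₋ have the same Hilbert dimension). In particular, if the dimensions of N₊ and N₋ differ, T has no self-adjoint extension. -/

import Mathlib

open MeasureTheory Complex Set LinearPMap
open scoped ComplexInnerProductSpace

section Helpers

variable {H : Type*} [NormedAddCommGroup H] [InnerProductSpace ℂ H]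

/-- The map `(x, y) ↦ y + c x`. -/
noncomputable def cayL (H : Type*) [NormedAddCommGroup H] [InnerProductSpace ℂ H] (c : ℂ) :
    H × H →L[ℂ] H :=
  ContinuousLinearMap.snd ℂ H H + c • ContinuousLinearMap.fst ℂ H H

theorem cayL_apply (c : ℂ) (p : H × H) : cayL H c p = p.2 + c • p.1 := rfl

/-- The range of `y + c x` over a graph. -/
noncomputable def cayR (g : Submodule ℂ (H × H)) (c : ℂ) : Submodule ℂ H :=
  g.map (cayL H c : H × H →ₗ[ℂ] H)

theorem cay_norm {g : Submodule ℂ (H × H)} (hg : g ≤ g.adjoint) {c : ℂ} (hc : c = I ∨ c = -I)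
    {p : H × H} (hp : p ∈ g) : ‖cayL H c p‖ ^ 2 = ‖p.1‖ ^ 2 + ‖p.2‖ ^ 2 := by
  have h := (Submodule.mem_adjoint_iff g p).1 (hg hp) p.1 p.2 hp
  have h1 : (⟪p.2, p.1⟫).im = 0 := by
    have h2 := congrArg Complex.im (inner_conj_symm p.2 p.1)
    rw [sub_eq_zero] at h
    rw [← h, Complex.conj_im] at h2
    linarith
  have hn : ‖c‖ = 1 := by rcases hc with rfl | rfl <;> simp
  rw [cayL_apply, @norm_add_sq ℂ, norm_smul, hn, inner_smul_right]
  have : RCLike.re (c * ⟪p.2, p.1⟫) = 0 := by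
    rcases hc with rfl | rfl <;> simp [h1]
  rw [this]; ring

theorem cay_norm_le {g : Submodule ℂ (H × H)} (hg : g ≤ g.adjoint) {c : ℂ} (hc : c = I ∨ c = -I)
    {p : H × H} (hp : p ∈ g) : ‖p‖ ≤ ‖cayL H c p‖ := by
  have h := cay_norm hg hc hp
  rw [Prod.norm_def]
  apply max_le
  · exact abs_le_of_sq_le_sq' (by nlinarith [sq_nonneg ‖p.2‖]) (norm_nonneg _) |>.2
  · exact abs_le_of_sq_le_sq' (by nlinarith [sq_nonneg ‖p.1‖]) (norm_nonneg _) |>.2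

theorem cayR_closed [CompleteSpace H] {g : Submodule ℂ (H × H)} (hg : g ≤ g.adjoint)
    (hcl : IsClosed (g : Set (H × H))) {c : ℂ} (hc : c = I ∨ c = -I) :
    IsClosed (cayR g c : Set H) := by
  have : CompleteSpace g := hcl.completeSpace_coe
  let f : g →L[ℂ] H := (cayL H c).comp g.subtypeL
  have hf : AntilipschitzWith 1 f := by
    apply AddMonoidHomClass.antilipschitz_of_bound
    intro x
    rw [NNReal.coe_one, one_mul]
    exact cay_norm_le hg hc x.2
  have := hf.isClosed_range f.uniformContinuous
  convert this using 1
  ext x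
  simp [cayR, f]

/-- The Cayley isometry. -/
theorem cay_exists {g : Submodule ℂ (H × H)} (hg : g ≤ g.adjoint) :
    ∃ V : cayR g I ≃ₗᵢ[ℂ] cayR g (-I), ∀ p (hp : p ∈ g),
      V ⟨cayL H I p, Submodule.mem_map_of_mem hp⟩ = cayL H (-I) p := by
  have key : ∀ c : ℂ, c = I ∨ c = -I → ∃ e : g ≃ₗ[ℂ] cayR g c, ∀ p, (e p : H) = cayL H c p := by
    intro c hc
    let f : g →ₗ[ℂ] cayR g c := (cayL H c : H × H →ₗ[ℂ] H).submoduleMap g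
    have hf : ∀ p, (f p : H) = cayL H c p := fun p => rfl
    refine ⟨LinearEquiv.ofBijective f ⟨?_, LinearMap.submoduleMap_surjective _ _⟩, hf⟩
    rw [injective_iff_map_eq_zero]
    intro p hp
    have h1 := cay_norm_le hg hc p.2
    rw [← hf, hp] at h1
    simpa using h1
  obtain ⟨e, he⟩ := key I (Or.inl rfl)
  obtain ⟨e', he'⟩ := key (-I) (Or.inr rfl)
  refine ⟨⟨e.symm.trans e', ?_⟩, ?_⟩
  · intro x
    obtain ⟨p, rfl⟩ := e.surjective x
    simp only [LinearEquiv.trans_apply, LinearEquiv.symm_apply_apply]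
    rw [Submodule.coe_norm, Submodule.coe_norm, he, he',
      ← sq_eq_sq₀ (norm_nonneg _) (norm_nonneg _), cay_norm hg (Or.inl rfl) p.2,
      cay_norm hg (Or.inr rfl) p.2]
  · intro p hp
    have : (⟨cayL H I p, Submodule.mem_map_of_mem hp⟩ : cayR g I) = e ⟨p, hp⟩ :=
      Subtype.ext (he ⟨p, hp⟩).symm
    rw [this]
    change ((e' (e.symm (e ⟨p, hp⟩)) : cayR g (-I)) : H) = _
    rw [LinearEquiv.symm_apply_apply, he']

theorem mem_cayR_orth {g : Submodule ℂ (H × H)} {c : ℂ} (hc : c = I ∨ c = -I) (x : H) :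
    x ∈ (cayR g c)ᗮ ↔ (x, c • x) ∈ g.adjoint := by
  have hcc : (starRingEnd ℂ) c = -c := by rcases hc with rfl | rfl <;> simp
  rw [Submodule.mem_adjoint_iff, Submodule.mem_orthogonal]
  have key : ∀ a b : H, ⟪b + c • a, x⟫ = ⟪b, x⟫ - ⟪a, c • x⟫ := by
    intro a b
    rw [inner_add_left, inner_smul_left, inner_smul_right, hcc]; ring
  constructor
  · intro h a b hab
    rw [← key]
    exact h _ ⟨(a, b), hab, rfl⟩
  · rintro h _ ⟨⟨a, b⟩, hab, rfl⟩
    exact (key a b).trans (h a b hab)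

/-- Gluing isometries along an orthogonal decomposition. -/
theorem glue_exists {K₁ K₂ : Submodule ℂ H} [K₁.HasOrthogonalProjection]
    [K₂.HasOrthogonalProjection]
    (V : K₁ ≃ₗᵢ[ℂ] K₂) (U : K₁ᗮ ≃ₗᵢ[ℂ] K₂ᗮ) :
    ∃ W : H ≃ₗᵢ[ℂ] H, ∀ x : K₁, W x = V x := by
  let f : H →ₗ[ℂ] H :=
    K₂.subtype ∘ₗ V.toLinearEquiv.toLinearMap ∘ₗ (K₁.orthogonalProjectionOnto : H →ₗ[ℂ] K₁) +
    K₂ᗮ.subtype ∘ₗ U.toLinearEquiv.toLinearMap ∘ₗ (K₁ᗮ.orthogonalProjectionOnto : H →ₗ[ℂ] K₁ᗮ)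
  have hf : ∀ x, f x = V (K₁.orthogonalProjectionOnto x) + U (K₁ᗮ.orthogonalProjectionOnto x) :=
    fun x => rfl
  have hV : ∀ x : K₁, f x = V x := by
    intro x
    rw [hf, Submodule.orthogonalProjectionOnto_mem_subspace_eq_self,
      Submodule.orthogonalProjectionOnto_orthogonal_apply_eq_zero x.2]
    simp
  have hU : ∀ x : K₁ᗮ, f x = U x := by
    intro x
    rw [hf, Submodule.orthogonalProjectionOnto_mem_subspace_eq_self,
      (Submodule.orthogonalProjectionOnto_eq_zero_iff).2 x.2]
    simp
  have hn : ∀ x, ‖f x‖ = ‖x‖ := by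
    intro x
    rw [← sq_eq_sq₀ (norm_nonneg _) (norm_nonneg _),
      Submodule.norm_sq_eq_add_norm_sq_projection x K₁, hf, sq, sq, sq,
      norm_add_sq_eq_norm_sq_add_norm_sq_of_inner_eq_zero (𝕜 := ℂ)]
    · rw [← Submodule.coe_norm, ← Submodule.coe_norm, V.norm_map, U.norm_map]
    · exact Submodule.inner_right_of_mem_orthogonal (Subtype.mem _) (Subtype.mem _)
  let F : H →ₗᵢ[ℂ] H := ⟨f, hn⟩
  refine ⟨LinearIsometryEquiv.ofSurjective F ?_, hV⟩
  intro y
  refine ⟨V.symm (K₂.orthogonalProjectionOnto y) + U.symm (K₂ᗮ.orthogonalProjectionOnto y), ?_⟩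
  change f _ = _
  rw [_root_.map_add, hV, hU, V.apply_symm_apply, U.apply_symm_apply]
  simp

end Helpers

/-- **Deficiency theorem (extension criterion).** A densely defined, closed, symmetric operator
`T` on a complex Hilbert space admits a self-adjoint extension if and only if its deficiency
subspaces `N₊ = ker(T† − i)` and `N₋ = ker(T† + i)` are isometrically isomorphic. -/
theorem selfadjoint_extension_iff_deficiency_isometric
    {H : Type*} [NormedAddCommGroup H] [InnerProductSpace ℂ H] [CompleteSpace H]
    (T : H →ₗ.[ℂ] H)
    (hdense : Dense (T.domain : Set H))
    (hclosed : T.IsClosed)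
    (hsym : ∀ φ ψ : T.domain, ⟪(φ : H), T ψ⟫ = ⟪T φ, (ψ : H)⟫)
    (Nplus Nminus : Submodule ℂ H)
    (hNp : ∀ x : H, x ∈ Nplus ↔
      ∃ hx : x ∈ T.adjoint.domain, T.adjoint ⟨x, hx⟩ = I • x)
    (hNm : ∀ x : H, x ∈ Nminus ↔
      ∃ hx : x ∈ T.adjoint.domain, T.adjoint ⟨x, hx⟩ = (-I) • x) :
    (∃ S : H →ₗ.[ℂ] H, T ≤ S ∧ S.adjoint = S) ↔
      Nonempty (Nplus ≃ₗᵢ[ℂ] Nminus) := by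
  classical
  have hgadj := LinearPMap.adjoint_graph_eq_graph_adjoint hdense
  have hg : T.graph ≤ T.graph.adjoint := by
    rintro ⟨x, y⟩ hxy
    rw [Submodule.mem_adjoint_iff]
    intro a b hab
    obtain ⟨u, rfl, rfl⟩ := (LinearPMap.mem_graph_iff T).1 hxy
    obtain ⟨v, rfl, rfl⟩ := (LinearPMap.mem_graph_iff T).1 hab
    rw [sub_eq_zero]
    exact (hsym v u).symm
  have hp : Nplus = (cayR T.graph I)ᗮ := by
    ext x
    rw [mem_cayR_orth (Or.inl rfl), ← hgadj, hNp, LinearPMap.mem_graph_iff]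
    constructor
    · rintro ⟨hx, h⟩; exact ⟨⟨x, hx⟩, rfl, h⟩
    · rintro ⟨⟨y, hy⟩, rfl, h⟩; exact ⟨hy, h⟩
  have hm : Nminus = (cayR T.graph (-I))ᗮ := by
    ext x
    rw [mem_cayR_orth (Or.inr rfl), ← hgadj, hNm, LinearPMap.mem_graph_iff]
    constructor
    · rintro ⟨hx, h⟩; exact ⟨⟨x, hx⟩, rfl, h⟩
    · rintro ⟨⟨y, hy⟩, rfl, h⟩; exact ⟨hy, h⟩
  clear hNp hNm
  subst hp hm
  constructor
  · rintro ⟨S, hTS, hS⟩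
    have hSd : Dense (S.domain : Set H) := IsSelfAdjoint.dense_domain hS
    have hSadj : S.graph.adjoint = S.graph := by
      rw [← LinearPMap.adjoint_graph_eq_graph_adjoint hSd, hS]
    have hSg : S.graph ≤ S.graph.adjoint := hSadj.ge
    have hScl : IsClosed (S.graph : Set (H × H)) := IsSelfAdjoint.isClosed hS
    have htop : ∀ c : ℂ, c = I ∨ c = -I → cayR S.graph c = ⊤ := by
      intro c hc
      have : CompleteSpace (cayR S.graph c) :=
        (cayR_closed hSg hScl hc).completeSpace_coe
      rw [← Submodule.orthogonal_eq_bot_iff, Submodule.eq_bot_iff]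
      intro x hx
      rw [mem_cayR_orth hc, hSadj] at hx
      have h1 := cay_norm_le hSg (c := -c) (by rcases hc with rfl | rfl <;> simp) hx
      rw [cayL_apply] at h1
      simp only [neg_smul, add_neg_cancel, norm_zero, norm_le_zero_iff, Prod.mk_eq_zero] at h1
      exact h1.1
    obtain ⟨V, hV⟩ := cay_exists hSg
    obtain ⟨W, hW⟩ : ∃ W : H ≃ₗᵢ[ℂ] H, ∀ p ∈ S.graph, W (cayL H I p) = cayL H (-I) p := by
      have hc1 : CompleteSpace (cayR S.graph I) :=
        (cayR_closed hSg hScl (Or.inl rfl)).completeSpace_coe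
      have hc2 : CompleteSpace (cayR S.graph (-I)) :=
        (cayR_closed hSg hScl (Or.inr rfl)).completeSpace_coe
      have heq : (cayR S.graph I)ᗮ = (cayR S.graph (-I))ᗮ := by
        rw [htop I (Or.inl rfl), htop (-I) (Or.inr rfl)]
      obtain ⟨W, hW⟩ := glue_exists V (LinearIsometryEquiv.ofEq _ _ heq)
      refine ⟨W, fun p hp => ?_⟩
      rw [← hV p hp, ← hW]
    have hmap : (cayR T.graph I).map (W.toLinearEquiv : H →ₗ[ℂ] H) = cayR T.graph (-I) := by
      have hle := LinearPMap.le_graph_of_le hTS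
      ext x
      constructor
      · rintro ⟨_, ⟨p, hp, rfl⟩, rfl⟩
        exact ⟨p, hp, (hW p (hle hp)).symm⟩
      · rintro ⟨p, hp, rfl⟩
        exact ⟨_, ⟨p, hp, rfl⟩, hW p (hle hp)⟩
    rw [← hmap, ← Submodule.map_orthogonal_equiv]
    exact ⟨W.submoduleMap _⟩
  · rintro ⟨U⟩
    have : CompleteSpace (cayR T.graph I) :=
      (cayR_closed hg hclosed (Or.inl rfl)).completeSpace_coe
    have : CompleteSpace (cayR T.graph (-I)) :=
      (cayR_closed hg hclosed (Or.inr rfl)).completeSpace_coe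
    obtain ⟨V, hV⟩ := cay_exists hg
    obtain ⟨W, hW⟩ := glue_exists V U
    let g : Submodule ℂ (H × H) :=
      LinearMap.ker ((W.toLinearEquiv : H →ₗ[ℂ] H) ∘ₗ (cayL H I : H × H →ₗ[ℂ] H) -
        (cayL H (-I) : H × H →ₗ[ℂ] H))
    have hmem : ∀ p : H × H, p ∈ g ↔ W (cayL H I p) = cayL H (-I) p := by
      intro p
      rw [← sub_eq_zero]; rfl
    have hTg : T.graph ≤ g := by
      intro p hp
      rw [hmem, ← hV p hp, ← hW]
    have hform : ∀ p q : H × H, ⟪cayL H I p, cayL H I q⟫ - ⟪cayL H (-I) p, cayL H (-I) q⟫ =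
        2 * I * (⟪p.2, q.1⟫ - ⟪p.1, q.2⟫) := by
      intro p q
      simp only [cayL_apply, inner_add_left, inner_add_right, inner_smul_left, inner_smul_right,
        _root_.map_neg, conj_I]
      ring
    have hgg : g.adjoint = g := by
      ext q
      rw [Submodule.mem_adjoint_iff]
      constructor
      · intro h
        rw [hmem]
        refine ext_inner_left ℂ fun v => ?_
        obtain ⟨u, rfl⟩ := W.surjective v
        rw [W.inner_map_map]
        let p : H × H := ((1 / (2 * I)) • (u - W u), (1 / 2 : ℂ) • (u + W u))
        have h1 : cayL H I p = u := by
          simp only [cayL_apply, p]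
          rw [smul_smul]
          have : I * (1 / (2 * I)) = 1 / 2 := by field_simp
          rw [this]; module
        have h2 : cayL H (-I) p = W u := by
          simp only [cayL_apply, p]
          rw [smul_smul]
          have : -I * (1 / (2 * I)) = -(1 / 2) := by field_simp
          rw [this]; module
        have h3 : p ∈ g := by rw [hmem, h1, h2]
        have h4 := hform p q
        rw [h p.1 p.2 h3, h1, h2, mul_zero, sub_eq_zero] at h4
        exact h4
      · intro h a b hab
        have h4 := hform (a, b) q
        rw [← (hmem _).1 h, ← (hmem _).1 hab, W.inner_map_map, sub_self] at h4
        simpa using h4.symm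
    have hdom : ∀ x ∈ T.domain, ∃ y, (x, y) ∈ g := fun x hx =>
      ⟨T ⟨x, hx⟩, hTg (T.mem_graph ⟨x, hx⟩)⟩
    have hfun : ∀ x ∈ g, x.1 = 0 → x.2 = 0 := by
      intro x hx hx0
      rw [← hgg, Submodule.mem_adjoint_iff] at hx
      apply hdense.eq_zero_of_inner_right ℂ
      intro a ha
      obtain ⟨b, hb⟩ := hdom a ha
      have := hx a b hb
      simpa [hx0] using this
    have hSgr : g.toLinearPMap.graph = g := Submodule.toLinearPMap_graph_eq g hfun
    have hTS : T ≤ g.toLinearPMap := LinearPMap.le_of_le_graph (hSgr.symm ▸ hTg)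
    refine ⟨g.toLinearPMap, hTS, ?_⟩
    apply LinearPMap.eq_of_eq_graph
    rw [LinearPMap.adjoint_graph_eq_graph_adjoint (hdense.mono hTS.1), hSgr, hgg]
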